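/- Fix m ≥ 1 and section data (l_j, vmin_j, vmax_j, τ_j) for j = 0,…,m−1 with l_j > 0, 0 < vmin_j < vmax_j, τ_j > 0, and vmin_j·τ_j ≤ l_j ≤ vmax_j·τ_j. Let t_e ∈ ℝ and 0 ≤ Δt ≤ Σ_{j<m} τ_j; let T_{i,j} = t_e + Σ_{ℓ<j} τ_ℓ and T_{i+1,j} = t_e + Δt + Σ_{ℓ<j} τ_ℓ. Let x̌_i be the lower-bound trajectory with entry time t_e and x̂_{i+1} the upper-bound trajectory with entry time t_e + Δt, and let T̃ = ({T_{i,j} : 0 ≤ j ≤ m} ∪ {T_{i,j} + ť_j : 0 ≤ j < m} ∪ {T_{i+1,j} : 0 ≤ j ≤ m} ∪ {T_{i+1,j} + t̂_j : 0 ≤ j < m}) ∩ [T_{i+1,0}, T_{i,m}], where ť_j = (vmax_j·τ_j − l_j)/(vmax_j − vmin_j) and t̂_j = (l_j − vmin_j·τ_j)/(vmax_j − vmin_j). Let safeD ≥ 0. If x̌_i(t) − x̂_{i+1}(t) ≥ safeD for all t ∈ T̃, then x̌_i(t) − x̂_{i+1}(t) ≥ safeD for all t ∈ [T_{i+1,0},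 T_{i,m}]. -/

import Mathlib

/-!
Both bounds are piecewise affine: inside section `j` the two lines defining the bound cross exactly
at the slope-switch time, which lies in the section because `vmin * τ ≤ l ≤ vmax * τ`. Hence
(`affineAround_of_sections`) every time `t` lies in an interval bounded by consecutive breakpoints
of the leader on which the leader's bound is affine, and likewise for the follower. On the
intersection of the two intervals the separation is affine, the endpoints of the intersection are
critical times of one of the two vehicles, and they lie in the overlap interval; an affine function
that is at least `safeD` at both endpoints is at least `safeD` in between
(`le_affine_of_le_endpoints`).
-/

/-- `t` lies in an interval `[a, b] ⊆ [lo, hi]` with endpoints in `C` on which `f` is affine. -/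
def AffineAround (C : ℝ → Prop) (f : ℝ → ℝ) (lo hi t : ℝ) : Prop :=
  ∃ a b s c : ℝ, C a ∧ C b ∧ lo ≤ a ∧ a ≤ t ∧ t ≤ b ∧ b ≤ hi ∧
    ∀ u ∈ Set.Icc a b, f u = s * u + c

theorem exists_section {T : ℕ → ℝ} {t : ℝ} (m : ℕ) (hm : 1 ≤ m) (h0 : T 0 ≤ t) (h1 : t ≤ T m) :
    ∃ j < m, t ∈ Set.Icc (T j) (T (j + 1)) := by
  induction m, hm using Nat.le_induction with
  | base => exact ⟨0, by omega, h0, h1⟩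
  | succ n hn ih =>
    rcases le_total t (T n) with h | h
    · obtain ⟨j, hj, hjt⟩ := ih h
      exact ⟨j, by omega, hjt⟩
    · exact ⟨n, by omega, h, h1⟩

/-- A function that is affine on both sides of a switch time `T j + r j` in each section is affine
around every time, with the waypoint and switch times as breakpoints. -/
theorem affineAround_of_sections {m : ℕ} (hm : 1 ≤ m) {τ T r : ℕ → ℝ} {e : ℝ}
    (hτ : ∀ j < m, 0 < τ j) (hT : ∀ j, T j = e + ∑ i ∈ Finset.range j, τ i)
    (hr0 : ∀ j < m, 0 ≤ r j) (hr1 : ∀ j < m, r j ≤ τ j) {f : ℝ → ℝ}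
    (hf0 : ∀ j < m, ∃ s c, ∀ u ∈ Set.Icc (T j) (T j + r j), f u = s * u + c)
    (hf1 : ∀ j < m, ∃ s c, ∀ u ∈ Set.Icc (T j + r j) (T (j + 1)), f u = s * u + c)
    {C : ℝ → Prop} (hC0 : ∀ j ≤ m, C (T j)) (hC1 : ∀ j < m, C (T j + r j))
    {t : ℝ} (h0 : T 0 ≤ t) (h1 : t ≤ T m) : AffineAround C f (T 0) (T m) t := by
  have hmono : ∀ a b, a ≤ b → b ≤ m → T a ≤ T b := by
    intro a b hab hb
    rw [hT, hT]
    gcongr 1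
    refine Finset.sum_le_sum_of_subset_of_nonneg (Finset.range_mono hab) fun i hi _ => ?_
    exact (hτ i (lt_of_lt_of_le (Finset.mem_range.1 hi) hb)).le
  obtain ⟨j, hj, hjt0, hjt1⟩ := exists_section m hm h0 h1
  have hsucc : T (j + 1) = T j + τ j := by
    rw [hT, hT, Finset.sum_range_succ]
    ring
  have hlo := hmono 0 j (Nat.zero_le j) hj.le
  have hhi := hmono (j + 1) m hj le_rfl
  have hrj0 := hr0 j hj
  have hrj1 := hr1 j hj
  rcases le_total t (T j + r j) with h | h
  · obtain ⟨s, c, hsc⟩ := hf0 j hj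
    exact ⟨_, _, s, c, hC0 j hj.le, hC1 j hj, hlo, hjt0, h, by linarith, hsc⟩
  · obtain ⟨s, c, hsc⟩ := hf1 j hj
    exact ⟨_, _, s, c, hC1 j hj, hC0 (j + 1) hj, by linarith, h, hjt1, hhi, hsc⟩

theorem le_affine_of_le_endpoints {a b t s c d : ℝ} (hat : a ≤ t) (htb : t ≤ b)
    (ha : d ≤ s * a + c) (hb : d ≤ s * b + c) : d ≤ s * t + c := by
  rcases le_total 0 s with hs | hs
  · linarith [mul_le_mul_of_nonneg_left hat hs]
  · linarith [mul_le_mul_of_nonpos_left htb hs]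

/-- Theorem 2 of the paper: If the separation between the
leader's lower-bound trajectory `x̌_i` and the follower's upper-bound
trajectory `x̂_{i+1}` is at least `safeD` at every time of the critical-time
set `T̃` (waypoint times and slope-switch times of both bounds, restricted to
`[T_{i+1,0}, T_{i,m}]`), then it is at least `safeD` on all of
`[T_{i+1,0}, T_{i,m}]`. -/
theorem critical_times_suffice_for_bound_separation
    (m : ℕ) (hm : 1 ≤ m) (l vmin vmax τ : ℕ → ℝ)
    (hl : ∀ j < m, 0 < l j)
    (hvmin : ∀ j < m, 0 < vmin j) (hvv : ∀ j < m, vmin j < vmax j)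
    (hτ : ∀ j < m, 0 < τ j)
    (hlo : ∀ j < m, vmin j * τ j ≤ l j) (hhi : ∀ j < m, l j ≤ vmax j * τ j)
    (te Δt : ℝ) (hΔt0 : 0 ≤ Δt) (hΔt1 : Δt ≤ ∑ j ∈ Finset.range m, τ j)
    (L Ti Tf : ℕ → ℝ)
    (hL : ∀ j, L j = ∑ ℓ ∈ Finset.range j, l ℓ)
    (hTi : ∀ j, Ti j = te + ∑ ℓ ∈ Finset.range j, τ ℓ)
    (hTf : ∀ j, Tf j = (te + Δt) + ∑ ℓ ∈ Finset.range j, τ ℓ)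
    -- leader's lower-bound trajectory and follower's upper-bound trajectory
    (xcheck xhat : ℝ → ℝ)
    (hxcheck : ∀ j < m, ∀ t ∈ Set.Icc (Ti j) (Ti (j + 1)),
      xcheck t = max (L j + vmin j * (t - Ti j)) (L (j + 1) - vmax j * (Ti (j + 1) - t)))
    (hxhat : ∀ j < m, ∀ t ∈ Set.Icc (Tf j) (Tf (j + 1)),
      xhat t = min (L j + vmax j * (t - Tf j)) (L (j + 1) - vmin j * (Tf (j + 1) - t)))
    -- critical-time set
    (Ttil : Set ℝ)
    (hTtil : Ttil =
      {t : ℝ |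
        (∃ j ≤ m, t = Ti j) ∨
        (∃ j < m, t = Ti j + (vmax j * τ j - l j) / (vmax j - vmin j)) ∨
        (∃ j ≤ m, t = Tf j) ∨
        (∃ j < m, t = Tf j + (l j - vmin j * τ j) / (vmax j - vmin j))}
      ∩ Set.Icc (Tf 0) (Ti m))
    (safeD : ℝ) (hsafeD : 0 ≤ safeD)
    (hsep : ∀ t ∈ Ttil, safeD ≤ xcheck t - xhat t) :
    ∀ t ∈ Set.Icc (Tf 0) (Ti m), safeD ≤ xcheck t - xhat t := by
  have hTi' : ∀ j, Ti (j + 1) = Ti j + τ j := fun j => by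
    rw [hTi, hTi, Finset.sum_range_succ]; ring
  have hTf' : ∀ j, Tf (j + 1) = Tf j + τ j := fun j => by
    rw [hTf, hTf, Finset.sum_range_succ]; ring
  have hL' : ∀ j, L (j + 1) = L j + l j := fun j => by
    rw [hL, hL, Finset.sum_range_succ]
  have hd : ∀ j < m, 0 < vmax j - vmin j := fun j hj => sub_pos.2 (hvv j hj)
  set ri : ℕ → ℝ := fun j => (vmax j * τ j - l j) / (vmax j - vmin j) with hri
  set rf : ℕ → ℝ := fun j => (l j - vmin j * τ j) / (vmax j - vmin j) with hrf
  have hri0 : ∀ j < m, 0 ≤ ri j := fun j hj =>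
    div_nonneg (sub_nonneg.2 (hhi j hj)) (hd j hj).le
  have hri1 : ∀ j < m, ri j ≤ τ j := fun j hj => by
    simp only [hri]
    rw [div_le_iff₀ (hd j hj)]
    linarith [hlo j hj]
  have hrf0 : ∀ j < m, 0 ≤ rf j := fun j hj =>
    div_nonneg (sub_nonneg.2 (hlo j hj)) (hd j hj).le
  have hrf1 : ∀ j < m, rf j ≤ τ j := fun j hj => by
    simp only [hrf]
    rw [div_le_iff₀ (hd j hj)]
    linarith [hhi j hj]
  have hrie : ∀ j < m, ri j * (vmax j - vmin j) = vmax j * τ j - l j := fun j hj =>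
    div_mul_cancel₀ _ (hd j hj).ne'
  have hrfe : ∀ j < m, rf j * (vmax j - vmin j) = l j - vmin j * τ j := fun j hj =>
    div_mul_cancel₀ _ (hd j hj).ne'
  intro t ht
  have hTf0 : Tf 0 = te + Δt := by rw [hTf]; simp
  have hTi0 : Ti 0 = te := by rw [hTi]; simp
  have hmm : Ti m ≤ Tf m := by rw [hTi, hTf]; linarith
  have hA : AffineAround
      (fun u => (∃ j ≤ m, u = Ti j) ∨ ∃ j < m, u = Ti j + ri j) xcheck (Ti 0) (Ti m) t := by
    refine affineAround_of_sections hm hτ hTi hri0 hri1 ?_ ?_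
      (fun j hj => Or.inl ⟨j, hj, rfl⟩) (fun j hj => Or.inr ⟨j, hj, rfl⟩)
      (by linarith [ht.1]) ht.2
    · intro j hj
      refine ⟨vmin j, L j - vmin j * Ti j, fun u hu => ?_⟩
      rw [hxcheck j hj u ⟨hu.1, by linarith [hu.2, hri1 j hj, hTi' j]⟩, max_eq_left]
      · ring
      · rw [hL', hTi']
        have := mul_le_mul_of_nonneg_right hu.2 (hd j hj).le
        linarith [hrie j hj]
    · intro j hj
      refine ⟨vmax j, L (j + 1) - vmax j * Ti (j + 1), fun u hu => ?_⟩
      rw [hxcheck j hj u ⟨by linarith [hu.1, hri0 j hj], hu.2⟩, max_eq_right]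
      · ring
      · rw [hL', hTi']
        have := mul_le_mul_of_nonneg_right hu.1 (hd j hj).le
        linarith [hrie j hj]
  have hB : AffineAround
      (fun u => (∃ j ≤ m, u = Tf j) ∨ ∃ j < m, u = Tf j + rf j) xhat (Tf 0) (Tf m) t := by
    refine affineAround_of_sections hm hτ hTf hrf0 hrf1 ?_ ?_
      (fun j hj => Or.inl ⟨j, hj, rfl⟩) (fun j hj => Or.inr ⟨j, hj, rfl⟩)
      ht.1 (by linarith [ht.2])
    · intro j hj
      refine ⟨vmax j, L j - vmax j * Tf j, fun u hu => ?_⟩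
      rw [hxhat j hj u ⟨hu.1, by linarith [hu.2, hrf1 j hj, hTf' j]⟩, min_eq_left]
      · ring
      · rw [hL', hTf']
        have := mul_le_mul_of_nonneg_right hu.2 (hd j hj).le
        linarith [hrfe j hj]
    · intro j hj
      refine ⟨vmin j, L (j + 1) - vmin j * Tf (j + 1), fun u hu => ?_⟩
      rw [hxhat j hj u ⟨by linarith [hu.1, hrf0 j hj], hu.2⟩, min_eq_right]
      · ring
      · rw [hL', hTf']
        have := mul_le_mul_of_nonneg_right hu.1 (hd j hj).le
        linarith [hrfe j hj]
  obtain ⟨a₁, b₁, s₁, c₁, ha₁, hb₁, -, hat₁, htb₁, hbm, hx⟩ := hA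
  obtain ⟨a₂, b₂, s₂, c₂, ha₂, hb₂, ham, hat₂, htb₂, -, hy⟩ := hB
  have hdiff : ∀ u, max a₁ a₂ ≤ u → u ≤ min b₁ b₂ →
      xcheck u - xhat u = (s₁ - s₂) * u + (c₁ - c₂) := by
    intro u h1 h2
    rw [max_le_iff] at h1
    rw [le_min_iff] at h2
    rw [hx u ⟨h1.1, h2.1⟩, hy u ⟨h1.2, h2.2⟩]
    ring
  have hta : max a₁ a₂ ≤ t := max_le hat₁ hat₂
  have htb : t ≤ min b₁ b₂ := le_min htb₁ htb₂
  have hcrit : ∀ u, (((∃ j ≤ m, u = Ti j) ∨ ∃ j < m, u = Ti j + ri j) ∨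
      ((∃ j ≤ m, u = Tf j) ∨ ∃ j < m, u = Tf j + rf j)) → u ∈ Set.Icc (Tf 0) (Ti m) →
      safeD ≤ xcheck u - xhat u := by
    intro u hu hI
    refine hsep u ?_
    rw [hTtil]
    exact ⟨or_assoc.1 hu, hI⟩
  -- The follower's breakpoint keeps the left end after `Tf 0`, the leader's keeps the right end
  -- before `Ti m`; the remaining two bounds come from `t` itself.
  have hA' := hcrit (max a₁ a₂)
    (by rcases max_choice a₁ a₂ with h | h <;> rw [h]
        exacts [Or.inl ha₁, Or.inr ha₂])
    ⟨ham.trans (le_max_right _ _), hta.trans ht.2⟩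
  have hB' := hcrit (min b₁ b₂)
    (by rcases min_choice b₁ b₂ with h | h <;> rw [h]
        exacts [Or.inl hb₁, Or.inr hb₂])
    ⟨ht.1.trans htb, (min_le_left _ _).trans hbm⟩
  rw [hdiff _ le_rfl (hta.trans htb)] at hA'
  rw [hdiff _ (hta.trans htb) le_rfl] at hB'
  rw [hdiff t hta htb]
  exact le_affine_of_le_endpoints hta htb hA' hB'
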